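/- arXiv:1603.09182 — 2 statements merged into one kernel-verified Lean document; each statement's English description precedes it below -/
import Mathlib

section
/- Let μ ∈ (1/2, 1) and u, v ∈ C_0^∞(a,b). Then ∫_a^b ({}_aD_x^{2μ} u)(x) v(x) dx = ∫_a^b ({}_aD_x^{μ} u)(x) ({}_xD_b^{μ} v)(x) dx, where {}_aD_x^{μ} and {}_xD_b^{μ} denote the left and right Riemann–Liouville fractional derivatives of order μ, and {}_aD_x^{2μ} the left fractional derivative of order 2μ ∈ (1,2). -/
open MeasureTheory intervalIntegral Set Real

/-!
Interchanging the order of integration over the triangle `a < s < x ≤ b` shows that the left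
fractional integral `I^α` is adjoint to the right one and, by Euler's beta integral, that
`I^α I^β = I^(α + β)`. A function whose derivatives of order less than `n` vanish at the base point
is the `n`-fold integral of its `n`-th derivative, so that derivatives commute with `I^α` on such
functions. Hence `∫ (D^(μ + ν) u) v = ∫ (I^(n - ν) I^(m - μ) u^(m + n)) v`; moving first `n`
ordinary derivatives and then `I^(n - ν)` onto `v` gives `∫ (D^μ u) (D_r^ν v)`, where `D_r` is the
right derivative.
-/

section IteratedDeriv

variable {𝕜 E : Type*} [NontriviallyNormedField 𝕜] [NormedAddCommGroup E] [NormedSpace 𝕜 E]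
  {f : 𝕜 → E}

theorem iteratedDeriv_iteratedDeriv (m n : ℕ) :
    iteratedDeriv n (iteratedDeriv m f) = iteratedDeriv (m + n) f := by
  simp only [iteratedDeriv_eq_iterate, add_comm m, Function.iterate_add_apply]

theorem iteratedDeriv_eq_zero_of_notMem_tsupport {x : 𝕜} (n : ℕ) (hx : x ∉ tsupport f) :
    iteratedDeriv n f x = 0 := by
  rw [iteratedDeriv_eq_iteratedFDeriv,
    Function.notMem_support.1 fun h => hx (support_iteratedFDeriv_subset n h)]
  rfl

end IteratedDeriv

section Fubini

variable {a b : ℝ}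

theorem integral_integral_swap_triangle {E : Type*} [NormedAddCommGroup E] [NormedSpace ℝ E]
    {F : ℝ → ℝ → E} (hab : a ≤ b)
    (hF : IntegrableOn (Function.uncurry F) {p | a < p.2 ∧ p.2 < p.1 ∧ p.1 ≤ b}) :
    ∫ x in a..b, ∫ y in a..x, F x y = ∫ y in a..b, ∫ x in y..b, F x y := by
  let T : Set (ℝ × ℝ) := {p | a < p.2 ∧ p.2 < p.1 ∧ p.1 ≤ b}
  have hT : MeasurableSet T := by measurability
  let G (x y : ℝ) : E := T.indicator (Function.uncurry F) (x, y)
  have left_slice (x : ℝ) :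
      (Ioc a b).indicator (fun x => ∫ y in a..x, F x y) x = ∫ y, G x y := by
    by_cases hx : x ∈ Ioc a b
    · rw [indicator_of_mem hx, integral_of_le hx.1.le, integral_Ioc_eq_integral_Ioo,
        ← MeasureTheory.integral_indicator measurableSet_Ioo]
      congr with y
      simp [G, T, indicator, hx.2]
    · rw [indicator_of_notMem hx, eq_comm]
      refine integral_eq_zero_of_ae (.of_forall fun y => indicator_of_notMem ?_ _)
      exact fun hy => hx ⟨hy.1.trans hy.2.1, hy.2.2⟩
  have right_slice (y : ℝ) :
      (Ioc a b).indicator (fun y => ∫ x in y..b, F x y) y = ∫ x, G x y := by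
    by_cases hy : y ∈ Ioc a b
    · rw [indicator_of_mem hy, integral_of_le hy.2,
        ← MeasureTheory.integral_indicator measurableSet_Ioc]
      congr with x
      simp [G, T, indicator, hy.1]
    · rw [indicator_of_notMem hy, eq_comm]
      refine integral_eq_zero_of_ae (.of_forall fun x => indicator_of_notMem ?_ _)
      exact fun hx => hy ⟨hx.1, (hx.2.1.trans_le hx.2.2).le⟩
  simp only [integral_of_le hab, ← MeasureTheory.integral_indicator measurableSet_Ioc,
    left_slice, right_slice]
  exact integral_integral_swap (f := G) ((integrable_indicator_iff hT).2 hF)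

theorem integrableOn_triangle_mul_kernel {h k f : ℝ → ℝ} (hh : IntegrableOn h (Ioc a b))
    (hk : IntegrableOn k (Ioc 0 (b - a))) (hf : ContinuousOn f (Icc a b)) :
    IntegrableOn (fun p : ℝ × ℝ => h p.1 * (k (p.1 - p.2) * f p.2))
      {p | a < p.2 ∧ p.2 < p.1 ∧ p.1 ≤ b} := by
  obtain ⟨C, hC⟩ := isCompact_Icc.exists_bound_of_continuousOn hf
  let h₀ := (Ioc a b).indicator h
  let k₀ := (Ioc 0 (b - a)).indicator k
  let f₀ := (Icc a b).indicator f
  have hf₀ : AEStronglyMeasurable f₀ :=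
    (aestronglyMeasurable_indicator_iff measurableSet_Icc).2
      (hf.aestronglyMeasurable measurableSet_Icc)
  have hf₀C (y : ℝ) : ‖f₀ y‖ ≤ max C 0 := by
    by_cases hy : y ∈ Icc a b
    · simpa [f₀, hy] using Or.inl (hC y hy)
    · simp [f₀, hy]
  -- `h x * k (x - y)` is, up to reflection, the integrand of a convolution of integrable functions.
  have hhk : Integrable (fun p : ℝ × ℝ => h₀ p.1 * k₀ (p.1 - p.2)) := by
    have := (((integrable_indicator_iff measurableSet_Ioc).2 hh).convolution_integrand
      (ContinuousLinearMap.mul ℝ ℝ)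
      ((integrable_indicator_iff measurableSet_Ioc).2 hk).comp_neg).swap
    simpa [Function.comp_def, Measure.volume_eq_prod, h₀, k₀] using this
  refine (hhk.mul_bdd (g := fun p => f₀ p.2) hf₀.comp_snd
    (.of_forall fun p => hf₀C p.2)).integrableOn.congr_fun ?_ (by measurability)
  rintro ⟨x, y⟩ ⟨hay, hyx, hxb⟩
  have hx : x ∈ Ioc a b := ⟨hay.trans hyx, hxb⟩
  have hxy : x - y ∈ Ioc 0 (b - a) := ⟨by linarith, by linarith⟩
  have hy : y ∈ Icc a b := ⟨hay.le, (hyx.trans_le hxb).le⟩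
  simp [h₀, k₀, f₀, indicator_of_mem, hx, hxy, hy, mul_assoc]

theorem integral_mul_integral_kernel_swap {h k f : ℝ → ℝ} (hab : a ≤ b)
    (hh : IntegrableOn h (Ioc a b)) (hk : IntegrableOn k (Ioc 0 (b - a)))
    (hf : ContinuousOn f (Icc a b)) :
    ∫ x in a..b, h x * ∫ y in a..x, k (x - y) * f y =
      ∫ y in a..b, f y * ∫ x in y..b, k (x - y) * h x := by
  calc ∫ x in a..b, h x * ∫ y in a..x, k (x - y) * f y
      = ∫ x in a..b, ∫ y in a..x, h x * (k (x - y) * f y) := by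
        simp only [intervalIntegral.integral_const_mul]
    _ = ∫ y in a..b, ∫ x in y..b, h x * (k (x - y) * f y) :=
        integral_integral_swap_triangle hab (integrableOn_triangle_mul_kernel hh hk hf)
    _ = ∫ y in a..b, f y * ∫ x in y..b, k (x - y) * h x := by
        simp only [← intervalIntegral.integral_const_mul]
        congr! 4
        ring

end Fubini

theorem integral_rpow_mul_sub_rpow {α β t : ℝ} (hα : 0 < α) (hβ : 0 < β) (ht : 0 < t) :
    ∫ x in 0..t, x ^ (α - 1) * (t - x) ^ (β - 1) =
      t ^ (α + β - 1) * (Gamma α * Gamma β / Gamma (α + β)) := by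
  have h := Complex.betaIntegral_scaled α β ht
  rw [Complex.betaIntegral_eq_Gamma_mul_div _ _ (by simpa) (by simpa), ← Complex.ofReal_add,
    Complex.Gamma_ofReal, Complex.Gamma_ofReal, Complex.Gamma_ofReal] at h
  rw [← Complex.ofReal_inj, ← intervalIntegral.integral_ofReal, Complex.ofReal_mul,
    Complex.ofReal_cpow ht.le]
  push_cast at h ⊢
  rw [← h]
  refine integral_congr fun x hx => ?_
  rw [uIcc_of_le ht.le] at hx
  rw [Complex.ofReal_cpow hx.1, Complex.ofReal_cpow (sub_nonneg.2 hx.2)]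
  push_cast
  rfl

/-- The left Riemann–Liouville fractional integral `I^α f` of order `α > 0` based at `a`. -/
noncomputable def leftRLIntegral (α a : ℝ) (f : ℝ → ℝ) (x : ℝ) : ℝ :=
  1 / Gamma α * ∫ s in a..x, (x - s) ^ (α - 1) * f s

/-- The right Riemann–Liouville fractional integral of order `α > 0` based at `b`. -/
noncomputable def rightRLIntegral (α b : ℝ) (f : ℝ → ℝ) (x : ℝ) : ℝ :=
  1 / Gamma α * ∫ s in x..b, (s - x) ^ (α - 1) * f s

/-- The left Riemann–Liouville fractional derivative of order `μ < n` based at `a`. The number `n`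
of classical derivatives is a parameter, which is `⌊μ⌋ + 1` in the literature. -/
noncomputable def leftRLDeriv (n : ℕ) (μ a : ℝ) (f : ℝ → ℝ) : ℝ → ℝ :=
  iteratedDeriv n (leftRLIntegral (n - μ) a f)

/-- The right Riemann–Liouville fractional derivative of order `μ < n` based at `b`, with the same
convention on `n` as in `leftRLDeriv`. -/
noncomputable def rightRLDeriv (n : ℕ) (μ b : ℝ) (f : ℝ → ℝ) (x : ℝ) : ℝ :=
  (-1) ^ n * iteratedDeriv n (rightRLIntegral (n - μ) b f) x

section RiemannLiouville

variable {α β μ a b x : ℝ} {n : ℕ} {f f' g : ℝ → ℝ}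

theorem leftRLIntegral_one : leftRLIntegral 1 a f x = ∫ s in a..x, f s := by
  simp [leftRLIntegral]

theorem leftRLIntegral_const_mul (c : ℝ) :
    leftRLIntegral α a (fun s => c * f s) x = c * leftRLIntegral α a f x := by
  simp only [leftRLIntegral, mul_left_comm _ c, intervalIntegral.integral_const_mul]

theorem rightRLIntegral_eq_leftRLIntegral_comp_neg :
    rightRLIntegral α b f x = leftRLIntegral α (-b) (fun s => f (-s)) (-x) := by
  rw [rightRLIntegral, leftRLIntegral, ← integral_comp_neg]
  simp only [neg_neg, neg_add_eq_sub, sub_neg_eq_add]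

theorem leftRLIntegral_congr (hax : a ≤ x) (hfg : EqOn f g (Icc a x)) :
    leftRLIntegral α a f x = leftRLIntegral α a g x := by
  rw [leftRLIntegral, leftRLIntegral]
  congr 1
  refine integral_congr fun s hs => ?_
  rw [uIcc_of_le hax] at hs
  simp only [hfg hs]

theorem integrableOn_rpow_sub_one (hα : 0 < α) : IntegrableOn (fun t => t ^ (α - 1)) (Ioc a b) :=
  (intervalIntegrable_rpow' (by linarith)).1

theorem integral_sub_rpow_mul_eq_rpow_mul_integral (hα : 0 < α) (hax : a ≤ x) :
    ∫ s in a..x, (x - s) ^ (α - 1) * f s =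
      (x - a) ^ α * ∫ t in 0..1, t ^ (α - 1) * f (x - (x - a) * t) := by
  rcases hax.eq_or_lt with rfl | hax
  · simp [hα.ne']
  have hpos : 0 < x - a := sub_pos.2 hax
  have hsubst := smul_integral_comp_sub_mul (a := 0) (b := 1)
    (fun s => (x - s) ^ (α - 1) * f s) (x - a) x
  simp only [mul_one, mul_zero, sub_zero, sub_sub_cancel, smul_eq_mul] at hsubst
  rw [← hsubst, ← intervalIntegral.integral_const_mul, ← intervalIntegral.integral_const_mul]
  refine integral_congr fun t ht => ?_
  rw [uIcc_of_le zero_le_one] at ht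
  simp only [mul_rpow hpos.le ht.1, rpow_sub_one hpos.ne']
  field_simp

theorem continuousOn_leftRLIntegral (hα : 0 < α) (hf : ContinuousOn f (Icc a b)) :
    ContinuousOn (leftRLIntegral α a f) (Icc a b) := by
  obtain ⟨C, hC⟩ := isCompact_Icc.exists_bound_of_continuousOn hf
  have mapsTo {t : ℝ} (ht : t ∈ Icc (0 : ℝ) 1) :
      MapsTo (fun x => x - (x - a) * t) (Icc a b) (Icc a b) := by
    rintro x ⟨hax, hxb⟩
    constructor <;> nlinarith [ht.1, ht.2]
  -- On the fixed interval `[0, 1]` the singular kernel no longer depends on `x`.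
  suffices ContinuousOn (fun x => ∫ t in 0..1, t ^ (α - 1) * f (x - (x - a) * t)) (Icc a b) by
    have hpow : Continuous fun x : ℝ => (x - a) ^ α :=
      (continuous_id.sub continuous_const).rpow_const fun _ => Or.inr hα.le
    refine ((continuousOn_const (c := 1 / Gamma α)).mul (hpow.continuousOn.mul this)).congr
      fun x hx => ?_
    exact congrArg (1 / Gamma α * ·) (integral_sub_rpow_mul_eq_rpow_mul_integral hα hx.1)
  simp only [integral_of_le zero_le_one]
  refine continuousOn_of_dominated (bound := fun t => t ^ (α - 1) * C) (fun x hx => ?_)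
    (fun x hx => ?_) ((integrableOn_rpow_sub_one hα).mul_const C) ?_
  · refine (integrableOn_rpow_sub_one hα).aestronglyMeasurable.mul
      (ContinuousOn.aestronglyMeasurable ?_ measurableSet_Ioc)
    exact hf.comp (by fun_prop) fun t ht => mapsTo (Ioc_subset_Icc_self ht) hx
  · filter_upwards [ae_restrict_mem measurableSet_Ioc] with t ht
    rw [norm_mul, norm_of_nonneg (rpow_nonneg ht.1.le _)]
    exact mul_le_mul_of_nonneg_left (hC _ (mapsTo (Ioc_subset_Icc_self ht) hx))
      (rpow_nonneg ht.1.le _)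
  · filter_upwards [ae_restrict_mem measurableSet_Ioc] with t ht
    exact continuousOn_const.mul
      (hf.comp (by fun_prop) (mapsTo (Ioc_subset_Icc_self ht)))

theorem integral_leftRLIntegral_mul (hab : a ≤ b) (hα : 0 < α) (hf : ContinuousOn f (Icc a b))
    (hg : IntegrableOn g (Ioc a b)) :
    ∫ x in a..b, leftRLIntegral α a f x * g x = ∫ x in a..b, f x * rightRLIntegral α b g x := by
  simp only [leftRLIntegral, rightRLIntegral, mul_assoc, mul_left_comm (f _),
    intervalIntegral.integral_const_mul]
  congr 1
  simpa only [mul_comm (g _)] using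
    integral_mul_integral_kernel_swap hab hg (integrableOn_rpow_sub_one hα) hf

theorem leftRLIntegral_leftRLIntegral (hα : 0 < α) (hβ : 0 < β) (hax : a ≤ x)
    (hf : ContinuousOn f (Icc a x)) :
    leftRLIntegral α a (leftRLIntegral β a f) x = leftRLIntegral (α + β) a f x := by
  have hh : IntegrableOn (fun s => (x - s) ^ (α - 1)) (Ioc a x) := by
    simpa using ((intervalIntegrable_rpow' (a := x - a) (b := 0) (by linarith)).comp_sub_left x).1
  have beta (y : ℝ) (hy : y ∈ Ioo a x) :
      ∫ s in y..x, (s - y) ^ (β - 1) * (x - s) ^ (α - 1) =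
        (x - y) ^ (α + β - 1) * (Gamma α * Gamma β / Gamma (α + β)) := by
    have hshift := integral_comp_add_right (a := 0) (b := x - y)
      (fun s => (s - y) ^ (β - 1) * (x - s) ^ (α - 1)) y
    simp only [zero_add, sub_add_cancel, add_sub_cancel_right, sub_add_eq_sub_sub_swap] at hshift
    rw [← hshift, integral_rpow_mul_sub_rpow hβ hα (sub_pos.2 hy.2), add_comm β,
      mul_comm (Gamma β)]
  have hΓα := (Gamma_pos_of_pos hα).ne'
  have hΓβ := (Gamma_pos_of_pos hβ).ne'
  calc leftRLIntegral α a (leftRLIntegral β a f) x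
      = 1 / Gamma α * (1 / Gamma β * ∫ s in a..x, (x - s) ^ (α - 1) *
          ∫ y in a..s, (s - y) ^ (β - 1) * f y) := by
        simp only [leftRLIntegral, mul_left_comm _ (1 / Gamma β),
          intervalIntegral.integral_const_mul]
    _ = 1 / Gamma α * (1 / Gamma β * ∫ y in a..x, f y *
          ∫ s in y..x, (s - y) ^ (β - 1) * (x - s) ^ (α - 1)) := by
        rw [integral_mul_integral_kernel_swap hax hh (integrableOn_rpow_sub_one hβ) hf]
    _ = 1 / Gamma α * (1 / Gamma β * ∫ y in a..x, Gamma α * Gamma β / Gamma (α + β) *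
          ((x - y) ^ (α + β - 1) * f y)) := by
        congr 2
        refine integral_congr_Ioo_of_le hax fun y hy => ?_
        simp only [beta y hy]
        ring
    _ = leftRLIntegral (α + β) a f x := by
        rw [intervalIntegral.integral_const_mul, leftRLIntegral]
        field_simp

theorem integral_leftRLIntegral_add_mul (hab : a ≤ b) (hα : 0 < α) (hβ : 0 < β)
    (hf : ContinuousOn f (Icc a b)) (hg : IntegrableOn g (Ioc a b)) :
    ∫ x in a..b, leftRLIntegral (α + β) a f x * g x =
      ∫ x in a..b, leftRLIntegral β a f x * rightRLIntegral α b g x := by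
  rw [← integral_leftRLIntegral_mul hab hα (continuousOn_leftRLIntegral hβ hf) hg]
  refine integral_congr_Ioo_of_le hab fun x hx => ?_
  simp only [leftRLIntegral_leftRLIntegral hα hβ hx.1.le
    (hf.mono (Icc_subset_Icc_right hx.2.le))]

theorem leftRLIntegral_add_one_of_hasDerivAt (hα : 0 < α) (hax : a ≤ x)
    (hf : ∀ s ∈ Icc a x, HasDerivAt f (f' s) s) (hf' : ContinuousOn f' (Icc a x))
    (ha : f a = 0) :
    leftRLIntegral (α + 1) a f' x = leftRLIntegral α a f x := by
  rw [← leftRLIntegral_leftRLIntegral hα one_pos hax hf']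
  refine leftRLIntegral_congr hax fun s hs => ?_
  have hsub : uIcc a s ⊆ Icc a x := uIcc_of_le hs.1 ▸ Icc_subset_Icc_right hs.2
  rw [leftRLIntegral_one, integral_eq_sub_of_hasDerivAt (fun t ht => hf t (hsub ht))
    (hf'.mono hsub).intervalIntegrable, ha, sub_zero]

theorem hasDerivAt_leftRLIntegral (hα : 0 < α) (hf : ∀ s ∈ Icc a b, HasDerivAt f (f' s) s)
    (hf' : ContinuousOn f' (Icc a b)) (ha : f a = 0) (hx : x ∈ Ioo a b) :
    HasDerivAt (leftRLIntegral α a f) (leftRLIntegral α a f' x) x := by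
  have hcont := continuousOn_leftRLIntegral hα hf'
  have hprim : HasDerivAt (fun y => ∫ s in a..y, leftRLIntegral α a f' s)
      (leftRLIntegral α a f' x) x :=
    integral_hasDerivAt_right
      (hcont.mono (uIcc_of_le hx.1.le ▸ Icc_subset_Icc_right hx.2.le)).intervalIntegrable
      ((hcont.mono Ioo_subset_Icc_self).stronglyMeasurableAtFilter isOpen_Ioo x hx)
      (hcont.continuousAt (Icc_mem_nhds hx.1 hx.2))
  refine hprim.congr_of_eventuallyEq ?_
  filter_upwards [Ioo_mem_nhds hx.1 hx.2] with y hy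
  have hsub : Icc a y ⊆ Icc a b := Icc_subset_Icc_right hy.2.le
  rw [← leftRLIntegral_one, leftRLIntegral_leftRLIntegral one_pos hα hy.1.le (hf'.mono hsub),
    add_comm, leftRLIntegral_add_one_of_hasDerivAt hα hy.1.le (fun s hs => hf s (hsub hs))
      (hf'.mono hsub) ha]

theorem leftRLIntegral_add_natCast_iteratedDeriv (n : ℕ) (hα : 0 < α) (hax : a ≤ x)
    (hf : ContDiff ℝ n f) (ha : ∀ i < n, iteratedDeriv i f a = 0) :
    leftRLIntegral (α + n) a (iteratedDeriv n f) x = leftRLIntegral α a f x := by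
  induction n with
  | zero => simp
  | succ n ih =>
    rw [Nat.cast_succ, ← add_assoc, leftRLIntegral_add_one_of_hasDerivAt (by positivity) hax
      (fun s _ => ?_) (hf.continuous_iteratedDeriv' _).continuousOn (ha n n.lt_succ_self)]
    · exact ih (hf.of_le (by exact_mod_cast n.le_succ)) fun i hi => ha i (hi.trans n.lt_succ_self)
    · rw [iteratedDeriv_succ]
      exact (hf.differentiable_iteratedDeriv' n s).hasDerivAt

theorem iteratedDeriv_leftRLIntegral (n : ℕ) (hα : 0 < α) (hax : a < x) (hf : ContDiff ℝ n f)
    (ha : ∀ i < n, iteratedDeriv i f a = 0) :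
    iteratedDeriv n (leftRLIntegral α a f) x = leftRLIntegral α a (iteratedDeriv n f) x := by
  induction n generalizing x with
  | zero => simp
  | succ n ih =>
    have hprev : iteratedDeriv n (leftRLIntegral α a f) =ᶠ[nhds x]
        leftRLIntegral α a (iteratedDeriv n f) := by
      filter_upwards [Ioi_mem_nhds hax] with y hy
      exact ih hy (hf.of_le (by exact_mod_cast n.le_succ))
        fun i hi => ha i (hi.trans n.lt_succ_self)
    rw [iteratedDeriv_succ, hprev.deriv_eq]
    refine (hasDerivAt_leftRLIntegral (b := x + 1) hα (fun s _ => ?_)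
      (hf.continuous_iteratedDeriv' _).continuousOn (ha n n.lt_succ_self)
      ⟨hax, lt_add_one x⟩).deriv
    rw [iteratedDeriv_succ]
    exact (hf.differentiable_iteratedDeriv' n s).hasDerivAt

theorem leftRLDeriv_eq_leftRLIntegral_iteratedDeriv (hμ : μ < n) (hax : a < x)
    (hf : ContDiff ℝ n f) (ha : ∀ i < n, iteratedDeriv i f a = 0) :
    leftRLDeriv n μ a f x = leftRLIntegral (n - μ) a (iteratedDeriv n f) x :=
  iteratedDeriv_leftRLIntegral n (sub_pos.2 hμ) hax hf ha

theorem rightRLIntegral_add_natCast_iteratedDeriv (n : ℕ) (hα : 0 < α) (hxb : x ≤ b)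
    (hf : ContDiff ℝ n f) (hb : ∀ i < n, iteratedDeriv i f b = 0) :
    (-1) ^ n * rightRLIntegral (α + n) b (iteratedDeriv n f) x = rightRLIntegral α b f x := by
  have hneg : ContDiff ℝ n fun s => f (-s) := hf.comp contDiff_neg
  rw [rightRLIntegral_eq_leftRLIntegral_comp_neg, rightRLIntegral_eq_leftRLIntegral_comp_neg,
    ← leftRLIntegral_add_natCast_iteratedDeriv n hα (neg_le_neg hxb) hneg fun i hi => ?_,
    ← leftRLIntegral_const_mul]
  · simp only [funext (iteratedDeriv_comp_neg n f), smul_eq_mul]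
  · simp [iteratedDeriv_comp_neg, hb i hi]

theorem rightRLDeriv_eq_leftRLDeriv_comp_neg :
    rightRLDeriv n μ b f x = leftRLDeriv n μ (-b) (fun s => f (-s)) (-x) := by
  have hrefl : rightRLIntegral (n - μ) b f =
      fun y => leftRLIntegral (n - μ) (-b) (fun s => f (-s)) (-y) :=
    funext fun _ => rightRLIntegral_eq_leftRLIntegral_comp_neg
  rw [rightRLDeriv, leftRLDeriv, hrefl, iteratedDeriv_comp_neg, smul_eq_mul, ← mul_assoc,
    ← mul_pow, neg_one_mul, neg_neg, one_pow, one_mul]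

theorem rightRLDeriv_eq_rightRLIntegral_iteratedDeriv (hμ : μ < n) (hxb : x < b)
    (hf : ContDiff ℝ n f) (hb : ∀ i < n, iteratedDeriv i f b = 0) :
    rightRLDeriv n μ b f x = (-1) ^ n * rightRLIntegral (n - μ) b (iteratedDeriv n f) x := by
  have hneg : ContDiff ℝ n fun s => f (-s) := hf.comp contDiff_neg
  rw [rightRLDeriv_eq_leftRLDeriv_comp_neg, rightRLIntegral_eq_leftRLIntegral_comp_neg,
    leftRLDeriv_eq_leftRLIntegral_iteratedDeriv hμ (neg_lt_neg hxb) hneg fun i hi => ?_,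
    ← leftRLIntegral_const_mul]
  · simp only [funext (iteratedDeriv_comp_neg n f), smul_eq_mul]
  · simp [iteratedDeriv_comp_neg, hb i hi]

theorem integral_leftRLIntegral_iteratedDeriv_mul (hab : a ≤ b) (hα : 0 < α)
    (hf : ContDiff ℝ n f) (ha : ∀ i < n, iteratedDeriv i f a = 0)
    (hg : ContDiff ℝ n g) (hb : ∀ i < n, iteratedDeriv i g b = 0) :
    ∫ x in a..b, leftRLIntegral α a (iteratedDeriv n f) x * g x =
      (-1) ^ n * ∫ x in a..b, leftRLIntegral α a f x * iteratedDeriv n g x := by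
  have hf' : ContinuousOn (iteratedDeriv n f) (Icc a b) :=
    (hf.continuous_iteratedDeriv' _).continuousOn
  calc ∫ x in a..b, leftRLIntegral α a (iteratedDeriv n f) x * g x
      = ∫ x in a..b, iteratedDeriv n f x * rightRLIntegral α b g x :=
        integral_leftRLIntegral_mul hab hα hf' hg.continuous.integrableOn_Ioc
    _ = (-1) ^ n * ∫ x in a..b, iteratedDeriv n f x *
          rightRLIntegral (α + n) b (iteratedDeriv n g) x := by
        rw [← intervalIntegral.integral_const_mul]
        refine integral_congr_Ioo_of_le hab fun x hx => ?_
        simp only [← rightRLIntegral_add_natCast_iteratedDeriv n hα hx.2.le hg hb]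
        ring
    _ = (-1) ^ n * ∫ x in a..b, leftRLIntegral (α + n) a (iteratedDeriv n f) x *
          iteratedDeriv n g x := by
        rw [integral_leftRLIntegral_mul hab (by positivity) hf'
          (hg.continuous_iteratedDeriv' _).integrableOn_Ioc]
    _ = (-1) ^ n * ∫ x in a..b, leftRLIntegral α a f x * iteratedDeriv n g x := by
        congr 1
        refine integral_congr_Ioo_of_le hab fun x hx => ?_
        simp only [leftRLIntegral_add_natCast_iteratedDeriv n hα hx.1.le hf ha]

theorem leftRLDeriv_one :
    leftRLDeriv 1 μ a f x =
      1 / Gamma (1 - μ) * deriv (fun y => ∫ s in a..y, (y - s) ^ (-μ) * f s) x := by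
  unfold leftRLDeriv leftRLIntegral
  simp only [iteratedDeriv_one, deriv_const_mul_field, Nat.cast_one, sub_sub_cancel_left]

theorem rightRLDeriv_one :
    rightRLDeriv 1 μ b f x =
      -(1 / Gamma (1 - μ)) * deriv (fun y => ∫ s in y..b, (s - y) ^ (-μ) * f s) x := by
  unfold rightRLDeriv rightRLIntegral
  simp only [iteratedDeriv_one, deriv_const_mul_field, Nat.cast_one, sub_sub_cancel_left, pow_one,
    neg_mul, one_mul]

theorem leftRLDeriv_two :
    leftRLDeriv 2 μ a f x =
      1 / Gamma (2 - μ) * deriv (deriv fun y => ∫ s in a..y, (y - s) ^ (1 - μ) * f s) x := by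
  have hexp : (2 : ℝ) - μ - 1 = 1 - μ := by ring
  unfold leftRLDeriv leftRLIntegral
  simp only [iteratedDeriv_succ, iteratedDeriv_zero, deriv_const_mul_field', Nat.cast_ofNat, hexp]

end RiemannLiouville

theorem fractional_transfer_of_derivative_general {a b μ ν : ℝ} {m n : ℕ} {u v : ℝ → ℝ}
    (hab : a ≤ b) (hμ : μ < m) (hν : ν < n)
    (hu : ContDiff ℝ (m + n : ℕ) u) (hua : ∀ i < m + n, iteratedDeriv i u a = 0)
    (hv : ContDiff ℝ n v) (hvb : ∀ i < n, iteratedDeriv i v b = 0) :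
    ∫ x in a..b, leftRLDeriv (m + n) (μ + ν) a u x * v x =
      ∫ x in a..b, leftRLDeriv m μ a u x * rightRLDeriv n ν b v x := by
  have hα : 0 < (m : ℝ) - μ := sub_pos.2 hμ
  have hβ : 0 < (n : ℝ) - ν := sub_pos.2 hν
  have hum : ContDiff ℝ m u := hu.of_le (by exact_mod_cast m.le_add_right n)
  have huma : ∀ i < m, iteratedDeriv i u a = 0 := fun i hi => hua i (hi.trans_le (m.le_add_right n))
  have hw : ContDiff ℝ n (iteratedDeriv m u) := by
    rw [iteratedDeriv_eq_iterate]
    exact ContDiff.iterate_deriv' n m (by simpa [add_comm] using hu)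
  have hwa : ∀ i < n, iteratedDeriv i (iteratedDeriv m u) a = 0 := fun i hi => by
    rw [iteratedDeriv_iteratedDeriv, hua _ (Nat.add_lt_add_left hi m)]
  calc ∫ x in a..b, leftRLDeriv (m + n) (μ + ν) a u x * v x
      = ∫ x in a..b, leftRLIntegral ((n - ν) + (m - μ)) a
          (iteratedDeriv n (iteratedDeriv m u)) x * v x := by
        refine integral_congr_Ioo_of_le hab fun x hx => ?_
        have hμν : μ + ν < (m + n : ℕ) := by push_cast; linarith
        simp only [leftRLDeriv_eq_leftRLIntegral_iteratedDeriv hμν hx.1 hu hua,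
          iteratedDeriv_iteratedDeriv]
        congr! 2
        push_cast
        ring
    _ = (-1) ^ n * ∫ x in a..b, leftRLIntegral ((n - ν) + (m - μ)) a (iteratedDeriv m u) x *
          iteratedDeriv n v x :=
        integral_leftRLIntegral_iteratedDeriv_mul hab (by positivity) hw hwa hv hvb
    _ = (-1) ^ n * ∫ x in a..b, leftRLIntegral (m - μ) a (iteratedDeriv m u) x *
          rightRLIntegral (n - ν) b (iteratedDeriv n v) x := by
        rw [integral_leftRLIntegral_add_mul hab hβ hα hw.continuous.continuousOn
          (hv.continuous_iteratedDeriv' _).integrableOn_Ioc]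
    _ = ∫ x in a..b, leftRLDeriv m μ a u x * rightRLDeriv n ν b v x := by
        rw [← intervalIntegral.integral_const_mul]
        refine integral_congr_Ioo_of_le hab fun x hx => ?_
        simp only [leftRLDeriv_eq_leftRLIntegral_iteratedDeriv hμ hx.1 hum huma,
          rightRLDeriv_eq_rightRLIntegral_iteratedDeriv hν hx.2 hv hvb]
        ring

/-- For `μ ∈ (1/2, 1)` and `u, v ∈ C_0^∞(a,b)`,
`∫_a^b ({}_aD_x^{2μ} u) v dx = ∫_a^b ({}_aD_x^{μ} u)({}_xD_b^{μ} v) dx`,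
where `{}_aD_x^{μ}`, `{}_xD_b^{μ}` are the left and right Riemann–Liouville
fractional derivatives of order `μ` and `{}_aD_x^{2μ}` the left fractional
derivative of order `2μ ∈ (1,2)`. -/
theorem fractional_transfer_of_derivative
    (a b μ : ℝ) (u v : ℝ → ℝ)
    (hab : a < b) (hμ0 : 1 / 2 < μ) (hμ1 : μ < 1)
    (hu : ContDiff ℝ (⊤ : ℕ∞) u) (husupp : HasCompactSupport u)
    (husub : tsupport u ⊆ Set.Ioo a b)
    (hv : ContDiff ℝ (⊤ : ℕ∞) v) (hvsupp : HasCompactSupport v)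
    (hvsub : tsupport v ⊆ Set.Ioo a b) :
    (∫ x in a..b,
        ((1 / Real.Gamma (2 - 2 * μ)) *
            deriv (deriv (fun y => ∫ s in a..y, (y - s) ^ (1 - 2 * μ) * u s)) x)
          * v x)
      = ∫ x in a..b,
          ((1 / Real.Gamma (1 - μ)) *
              deriv (fun y => ∫ s in a..y, (y - s) ^ (-μ) * u s) x) *
            (-(1 / Real.Gamma (1 - μ)) *
              deriv (fun y => ∫ s in y..b, (s - y) ^ (-μ) * v s) x) := by
  have hμ : μ < (1 : ℕ) := by exact_mod_cast hμ1
  have hua : ∀ i < 1 + 1, iteratedDeriv i u a = 0 := fun i _ =>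
    iteratedDeriv_eq_zero_of_notMem_tsupport i fun ha => left_notMem_Ioo (husub ha)
  have hvb : ∀ i < 1, iteratedDeriv i v b = 0 := fun i _ =>
    iteratedDeriv_eq_zero_of_notMem_tsupport i fun hb => right_notMem_Ioo (hvsub hb)
  simpa only [Nat.reduceAdd, ← two_mul μ, leftRLDeriv_one, leftRLDeriv_two, rightRLDeriv_one]
    using fractional_transfer_of_derivative_general hab.le hμ hμ
      (contDiff_infty.1 hu _) hua (contDiff_infty.1 hv _) hvb
end

section
/- For μ ∈ (0,1), μ ≠ 1/2, and u smooth with compact support on ℝ, the inner product of left and right fractional derivatives satisfies ( {}_{-∞}D_x^{μ} u, {}_xD_{∞}^{μ} u )_{L^2(ℝ)} = cos(μπ) ‖ {}_{-∞}D_x^{μ} u ‖²_{L^2(ℝ)}. -/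
open MeasureTheory Set Real

/-- Left Riemann–Liouville fractional derivative of order `μ ∈ (0,1)` on `ℝ`. -/
noncomputable def leftFracDerivR (μ : ℝ) (u : ℝ → ℝ) (x : ℝ) : ℝ :=
  (1 / Real.Gamma (1 - μ)) *
    deriv (fun y => ∫ s in Set.Iic y, (y - s) ^ (-μ) * u s) x

/-- Right Riemann–Liouville fractional derivative of order `μ ∈ (0,1)` on `ℝ`. -/
noncomputable def rightFracDerivR (μ : ℝ) (u : ℝ → ℝ) (x : ℝ) : ℝ :=
  -(1 / Real.Gamma (1 - μ)) *
    deriv (fun y => ∫ s in Set.Ici y, (s - y) ^ (-μ) * u s) x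

open Filter Topology Asymptotics Bornology

/-!
With `D` and `D*` the left and right derivatives, the function `F(z) = ∫ u'(s) (z - s)^(-μ) ds` is
holomorphic in the upper half-plane and continuous up to the real line, where
`t^(-μ) = t₊^(-μ) + e^{-iπμ} t₋^(-μ)` gives `F = Γ(1 - μ) (D u - e^{-iπμ} D* u)`. Integration by
parts shows `F(z) = O(1/z)`, so Cauchy's theorem yields `∫ F² = 0` over the real line. Expanding
the square and separating real and imaginary parts gives `∫ D u · D* u = cos(πμ) ∫ (D* u)²` and
`∫ (D u)² = ∫ (D* u)²`.
-/

section UpperHalfPlane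

variable {E : Type*} [NormedAddCommGroup E] [NormedSpace ℂ E] {f : ℂ → E}

lemma intervalIntegral_eq_of_diffContOnCl_upperHalfPlane
    (hf : DiffContOnCl ℂ f {z | 0 < z.im}) {N : ℝ} (hN : 0 ≤ N) :
    ∫ x in (-N)..N, f x = (∫ x in (-N)..N, f (x + N * Complex.I)) -
      Complex.I • (∫ y in 0..N, f (N + y * Complex.I)) +
      Complex.I • ∫ y in 0..N, f (-N + y * Complex.I) := by
  have hcont : ContinuousOn f {z | 0 ≤ z.im} := by
    simpa only [Complex.closure_setOfPred_lt_im] using hf.continuousOn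
  have cauchy := Complex.integral_boundary_rect_eq_zero_of_continuousOn_of_differentiableOn f
    (-N) (N + N * Complex.I) (hcont.mono fun z hz => ?_) (hf.differentiableOn.mono fun z hz => ?_)
  · simp only [Complex.neg_re, Complex.ofReal_re, Complex.add_re, Complex.re_ofReal_mul,
      Complex.I_re, mul_zero, add_zero, Complex.neg_im, Complex.ofReal_im, neg_zero,
      Complex.ofReal_zero, zero_mul, Complex.add_im, Complex.im_ofReal_mul, Complex.I_im, mul_one,
      zero_add, Complex.ofReal_neg] at cauchy
    rw [← sub_eq_zero, ← cauchy]
    abel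
  · have : z.im ∈ Icc 0 N := by simpa [hN] using hz.2
    exact this.1
  · have : z.im ∈ Ioo 0 N := by simpa [hN] using hz.2
    exact this.1

lemma norm_intervalIntegral_le_of_diffContOnCl_upperHalfPlane
    (hf : DiffContOnCl ℂ f {z | 0 < z.im}) {N C : ℝ} (hN : 0 < N)
    (hC : ∀ z : ℂ, 0 < z.im → N ≤ ‖z‖ → ‖f z‖ ≤ C) :
    ‖∫ x in (-N)..N, f x‖ ≤ 4 * (C * N) := by
  have htop : ‖∫ x in (-N)..N, f (x + N * Complex.I)‖ ≤ C * |N - -N| := by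
    refine intervalIntegral.norm_integral_le_of_norm_le_const fun x _ => hC _ (by simpa) ?_
    simpa [abs_of_pos hN] using Complex.abs_im_le_norm (x + N * Complex.I)
  have hside (a : ℝ) (ha : |a| = N) : ‖∫ y in 0..N, f (a + y * Complex.I)‖ ≤ C * |N - 0| := by
    refine intervalIntegral.norm_integral_le_of_norm_le_const fun y hy => hC _ ?_ ?_
    · rw [uIoc_of_le hN.le] at hy
      simpa using hy.1
    · simpa [ha] using Complex.abs_re_le_norm (a + y * Complex.I)
  have hright := hside N (abs_of_pos hN)
  have hleft := hside (-N) (by rw [abs_neg, abs_of_pos hN])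
  rw [sub_neg_eq_add, abs_of_pos (by linarith)] at htop
  rw [sub_zero, abs_of_pos hN] at hright hleft
  push_cast at hleft
  rw [intervalIntegral_eq_of_diffContOnCl_upperHalfPlane hf hN.le]
  refine (norm_add_le _ _).trans ((add_le_add_left (norm_sub_le _ _) _).trans ?_)
  simp only [norm_smul, Complex.norm_I, one_mul]
  linarith

lemma integral_ofReal_eq_zero_of_isLittleO_inv (hf : DiffContOnCl ℂ f {z | 0 < z.im})
    (hint : Integrable fun x : ℝ => f x)
    (hdecay : f =o[cobounded ℂ ⊓ 𝓟 {z | 0 < z.im}] fun z => z⁻¹) :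
    ∫ x : ℝ, f x = 0 := by
  have hlim := intervalIntegral_tendsto_integral hint tendsto_neg_atTop_atBot tendsto_id
  refine tendsto_nhds_unique hlim (Metric.tendsto_nhds.2 fun ε hε => ?_)
  have hsmall := hdecay.def (show 0 < ε / 8 by positivity)
  rw [eventually_inf_principal, ← comap_norm_atTop, eventually_comap,
    eventually_atTop] at hsmall
  obtain ⟨R, hR⟩ := hsmall
  filter_upwards [eventually_ge_atTop R, eventually_gt_atTop 0] with N hRN hN
  have hC (z : ℂ) (hz : 0 < z.im) (hzN : N ≤ ‖z‖) : ‖f z‖ ≤ ε / 8 * N⁻¹ :=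
    calc ‖f z‖ ≤ ε / 8 * ‖z⁻¹‖ := hR ‖z‖ (hRN.trans hzN) z rfl hz
      _ ≤ ε / 8 * N⁻¹ := by rw [norm_inv]; gcongr
  calc dist (∫ x in (-N)..N, f x) 0
      ≤ 4 * (ε / 8 * N⁻¹ * N) := by
        rw [dist_zero_right]
        exact norm_intervalIntegral_le_of_diffContOnCl_upperHalfPlane hf hN hC
    _ = ε / 2 := by field_simp; norm_num
    _ < ε := half_lt_self hε

end UpperHalfPlane

section SquareIntegrable

variable {E : Type*} [NormedAddCommGroup E]

lemma memLp_two_of_isBigO_inv {g : ℝ → E} (hg : Continuous g)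
    (hdecay : g =O[cocompact ℝ] fun x => x⁻¹) : MemLp g 2 := by
  rw [memLp_two_iff_integrable_sq_norm hg.aestronglyMeasurable]
  have hinv : (fun x : ℝ => x⁻¹ ^ 2) =O[cocompact ℝ] fun x => (1 + x ^ 2)⁻¹ := by
    refine IsBigO.of_bound 2 ?_
    filter_upwards [(isCompact_Icc (a := (-1 : ℝ)) (b := 1)).compl_mem_cocompact] with x hx
    have h1 : 1 ≤ x ^ 2 := by
      rw [one_le_sq_iff_one_le_abs]
      by_contra! h
      exact hx (abs_le.1 h.le)
    rw [norm_of_nonneg (by positivity), norm_of_nonneg (by positivity), inv_pow,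
      ← div_eq_mul_inv, inv_le_comm₀ (by positivity) (by positivity), inv_div]
    linarith
  exact (hg.norm.pow 2).locallyIntegrable.integrable_of_isBigO_cocompact
    ((hdecay.norm_left.pow 2).trans hinv) (integrable_inv_one_add_sq.integrableAtFilter _)

variable {α : Type*} {m : MeasurableSpace α} {ν : Measure α} {p q : α → ℝ} {θ : ℝ}

lemma memLp_of_sub_exp_mul (hθ : sin θ ≠ 0) {e : ENNReal}
    (h : MemLp (fun x => (p x : ℂ) - Complex.exp (θ * Complex.I) * q x) e ν) :
    MemLp p e ν ∧ MemLp q e ν := by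
  have hq : MemLp q e ν := by
    refine (h.im.const_mul (-(sin θ)⁻¹)).ae_eq (.of_forall fun x => ?_)
    simp [Complex.exp_re, Complex.exp_im, hθ]
  refine ⟨(h.re.add (hq.const_mul (cos θ))).ae_eq (.of_forall fun x => ?_), hq⟩
  simp [Complex.exp_re, Complex.exp_im]

lemma integral_mul_eq_cos_mul_integral_sq (hθ : sin θ ≠ 0) (hp : MemLp p 2 ν) (hq : MemLp q 2 ν)
    (h : ∫ x, ((p x : ℂ) - Complex.exp (θ * Complex.I) * q x) ^ 2 ∂ν = 0) :
    ∫ x, p x * q x ∂ν = cos θ * ∫ x, p x ^ 2 ∂ν := by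
  have hpp : Integrable (fun x => ((p x ^ 2 : ℝ) : ℂ)) ν := hp.integrable_sq.ofReal
  have hqq : Integrable (fun x => ((q x ^ 2 : ℝ) : ℂ)) ν := hq.integrable_sq.ofReal
  have hpq : Integrable (fun x => ((p x * q x : ℝ) : ℂ)) ν := (hp.integrable_mul hq).ofReal
  set P := ∫ x, p x ^ 2 ∂ν
  set Q := ∫ x, q x ^ 2 ∂ν
  set S := ∫ x, p x * q x ∂ν
  have hexpand : (P : ℂ) - 2 * Complex.exp (θ * Complex.I) * S
      + Complex.exp (θ * Complex.I) ^ 2 * Q = 0 := by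
    rw [← h, ← integral_complex_ofReal, ← integral_complex_ofReal, ← integral_complex_ofReal,
      ← integral_const_mul, ← integral_const_mul, ← integral_sub hpp (hpq.const_mul _),
      ← integral_add (by exact hpp.sub (hpq.const_mul _)) (hqq.const_mul _)]
    congr 1 with x
    push_cast
    ring
  have hre : P - 2 * cos θ * S + (cos θ ^ 2 - sin θ ^ 2) * Q = 0 := by
    simpa [sq, Complex.exp_re, Complex.exp_im] using congrArg Complex.re hexpand
  have him : -(2 * sin θ * S) + (cos θ * sin θ + sin θ * cos θ) * Q = 0 := by
    simpa [sq, Complex.exp_re, Complex.exp_im] using congrArg Complex.im hexpand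
  have hSQ : S = cos θ * Q := mul_left_cancel₀ hθ (by linear_combination -him / 2)
  have hPQ : P = Q := by
    rw [hSQ] at hre
    linear_combination hre + Q * sin_sq_add_cos_sq θ
  rw [hSQ, hPQ]

end SquareIntegrable

section FracCauchyTransform

/-- The integral `∫ v(s) (z - s)^r ds`. Since the principal branch of the logarithm is continuous
from above along the negative axis, its values at real `z` are the limits from the upper half-plane,
so no separate notion of boundary value is needed. -/
noncomputable def fracCauchyTransform (r : ℝ) (v : ℝ → ℂ) (z : ℂ) : ℂ :=
  ∫ s : ℝ, v s * (z - s) ^ (r : ℂ)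

variable {r : ℝ} {v : ℝ → ℂ}

lemma continuousOn_cpow_const_im_nonneg (c : ℂ) :
    ContinuousOn (· ^ c) ({z : ℂ | 0 ≤ z.im} \ {0}) := by
  rintro z ⟨-, hz0 : z ≠ 0⟩
  by_cases hslit : z ∈ Complex.slitPlane
  · exact (continuousAt_cpow_const hslit).continuousWithinAt
  · obtain ⟨hre, him⟩ : z.re ≤ 0 ∧ z.im = 0 := by
      simpa [Complex.mem_slitPlane_iff] using hslit
    have hre : z.re < 0 := hre.lt_of_ne fun h => hz0 (Complex.ext h him)
    have hlog := (Complex.continuousWithinAt_log_of_re_neg_of_im_zero hre him).mono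
      (sdiff_subset (t := {0}))
    exact (hlog.mul continuousWithinAt_const).cexp.congr
      (fun w hw => Complex.cpow_def_of_ne_zero hw.2 c) (Complex.cpow_def_of_ne_zero hz0 c)

lemma locallyIntegrable_of_norm_le_abs_rpow (hr : -1 < r) {k : ℝ → ℝ} (hk : Measurable k)
    (hle : ∀ t, ‖k t‖ ≤ |t| ^ r) : LocallyIntegrable k := by
  refine locallyIntegrable_of_norm_le_rpow (C := 1) (α := -r) (by simp) ?_
    (.of_forall fun t => ?_) hk.aestronglyMeasurable
  · simpa using neg_lt.1 hr
  · simpa using hle t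

-- This form keeps the singularity at `t = 0` as `z` varies, so that the integrands of nearby points
-- have a common dominating function.
lemma fracCauchyTransform_eq_integral_shift (r : ℝ) (v : ℝ → ℂ) (z : ℂ) :
    fracCauchyTransform r v z = ∫ t : ℝ, v (z.re - t) * (t + z.im * Complex.I) ^ (r : ℂ) := by
  rw [fracCauchyTransform, ← integral_sub_left_eq_self _ volume z.re]
  congr 1 with t
  congr 2
  push_cast
  linear_combination -Complex.re_add_im z

lemma norm_add_mul_I_cpow_le (hr : r ≤ 0) {t : ℝ} (ht : t ≠ 0) (y : ℝ) :
    ‖((t : ℂ) + y * Complex.I) ^ (r : ℂ)‖ ≤ |t| ^ r := by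
  rw [Complex.norm_cpow_real]
  refine rpow_le_rpow_of_nonpos (abs_pos.2 ht) ?_ hr
  simpa using Complex.abs_re_le_norm (t + y * Complex.I)

lemma continuousOn_fracCauchyTransform (hr : -1 < r) (hr0 : r ≤ 0) (hv : Continuous v)
    (hsupp : HasCompactSupport v) :
    ContinuousOn (fracCauchyTransform r v) {z | 0 ≤ z.im} := by
  intro z hz
  simp only [funext (fracCauchyTransform_eq_integral_shift r v)]
  obtain ⟨M, hM⟩ := hv.bounded_above_of_compact_support hsupp
  have hM0 : 0 ≤ M := (norm_nonneg _).trans (hM 0)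
  set K := (fun p : ℝ × ℝ => p.1 - p.2) '' (Metric.closedBall z.re 1 ×ˢ tsupport v)
  have hK : IsCompact K := ((isCompact_closedBall _ _).prod hsupp.isCompact).image continuous_sub
  have hloc : LocallyIntegrable fun t : ℝ => |t| ^ r :=
    locallyIntegrable_of_norm_le_abs_rpow hr (by fun_prop) fun t =>
      (norm_of_nonneg (by positivity)).le
  have hbound : Integrable (K.indicator fun t => M * |t| ^ r) :=
    IntegrableOn.integrable_indicator ((hloc.integrableOn_isCompact hK).const_mul M)
      hK.measurableSet
  refine continuousWithinAt_of_dominated (.of_forall fun w => ?_) ?_ hbound ?_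
  · exact Measurable.aestronglyMeasurable (by fun_prop)
  · have hnear : ∀ᶠ w : ℂ in 𝓝[{z | 0 ≤ z.im}] z, w.re ∈ Metric.closedBall z.re 1 :=
      (Complex.continuous_re.tendsto z).mono_left nhdsWithin_le_nhds
        (Metric.closedBall_mem_nhds _ one_pos)
    filter_upwards [hnear] with w hw
    filter_upwards [Measure.ae_ne volume 0] with t ht
    by_cases htv : w.re - t ∈ tsupport v
    · have htK : t ∈ K := ⟨(w.re, w.re - t), ⟨hw, htv⟩, sub_sub_cancel _ _⟩
      rw [indicator_of_mem htK, norm_mul]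
      exact mul_le_mul (hM _) (norm_add_mul_I_cpow_le hr0 ht _) (norm_nonneg _) hM0
    · rw [image_eq_zero_of_notMem_tsupport htv, zero_mul, norm_zero]
      exact indicator_nonneg (fun _ _ => by positivity) t
  · filter_upwards [Measure.ae_ne volume 0] with t ht
    refine ContinuousWithinAt.mul (by fun_prop) ?_
    have hmaps : MapsTo (fun w : ℂ => (t : ℂ) + w.im * Complex.I) {w | 0 ≤ w.im}
        ({w | 0 ≤ w.im} \ {0}) := fun w hw =>
      ⟨by simpa using hw, fun h => ht (by simpa using congrArg Complex.re h)⟩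
    exact (continuousOn_cpow_const_im_nonneg r).comp (by fun_prop) hmaps z hz

lemma sub_ofReal_mem_slitPlane {z : ℂ} (hz : 0 < z.im) (s : ℝ) : z - s ∈ Complex.slitPlane :=
  .inr (by simpa using hz.ne')

lemma norm_sub_ofReal_cpow_le (hr : r ≤ 0) {c : ℝ} (hc : 0 < c) {z : ℂ} (hz : c ≤ z.im) (s : ℝ) :
    ‖(z - s) ^ (r : ℂ)‖ ≤ c ^ r := by
  rw [Complex.norm_cpow_real]
  refine rpow_le_rpow_of_nonpos hc (hz.trans ?_) hr
  simpa using Complex.im_le_norm (z - s)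

lemma hasDerivAt_fracCauchyTransform (hr : r ≤ 0) (hv : Integrable v) {z : ℂ} (hz : 0 < z.im) :
    HasDerivAt (fracCauchyTransform r v) (r * fracCauchyTransform (r - 1) v z) z := by
  have him {w : ℂ} (hw : w ∈ Metric.ball z (z.im / 2)) : z.im / 2 ≤ w.im := by
    have h1 := (Complex.abs_im_le_norm (w - z)).trans_lt (mem_ball_iff_norm.1 hw)
    rw [Complex.sub_im] at h1
    linarith [neg_abs_le (w.im - z.im)]
  have hmeas (a : ℝ) (w : ℂ) : AEStronglyMeasurable fun s : ℝ => (w - s) ^ (a : ℂ) :=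
    Measurable.aestronglyMeasurable (by fun_prop)
  rw [fracCauchyTransform, ← integral_const_mul]
  refine (hasDerivAt_integral_of_dominated_loc_of_deriv_le
    (F := fun (w : ℂ) (s : ℝ) => v s * (w - s) ^ (r : ℂ))
    (F' := fun w s => r * (v s * (w - s) ^ ((r - 1 : ℝ) : ℂ)))
    (bound := fun s => ‖r‖ * (‖v s‖ * (z.im / 2) ^ (r - 1)))
    (Metric.ball_mem_nhds z (half_pos hz)) (.of_forall fun w => ?_) ?_ ?_
    (.of_forall fun s w hw => ?_) ((hv.norm.mul_const _).const_mul _)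
    (.of_forall fun s w hw => ?_)).2
  · exact hv.aestronglyMeasurable.mul (hmeas r w)
  · exact hv.mul_bdd (hmeas r z) (.of_forall fun s => norm_sub_ofReal_cpow_le hr hz le_rfl s)
  · exact (hv.aestronglyMeasurable.mul (hmeas (r - 1) z)).const_mul _
  · rw [norm_mul, norm_mul, Complex.norm_real]
    gcongr
    exact norm_sub_ofReal_cpow_le (by linarith) (half_pos hz) (him hw) s
  · have hpow := ((hasDerivAt_id w).sub_const (s : ℂ)).cpow_const (c := (r : ℂ))
      (sub_ofReal_mem_slitPlane ((half_pos hz).trans_le (him hw)) s)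
    refine (hpow.const_mul (v s)).congr_deriv ?_
    push_cast
    simp only [id]
    ring

lemma diffContOnCl_fracCauchyTransform (hr : -1 < r) (hr0 : r ≤ 0) (hv : Continuous v)
    (hsupp : HasCompactSupport v) :
    DiffContOnCl ℂ (fracCauchyTransform r v) {z | 0 < z.im} where
  differentiableOn z hz := (hasDerivAt_fracCauchyTransform hr0
    (hv.integrable_of_hasCompactSupport hsupp) hz).differentiableAt.differentiableWithinAt
  continuousOn := by
    rw [Complex.closure_setOfPred_lt_im]
    exact continuousOn_fracCauchyTransform hr hr0 hv hsupp

lemma hasDerivAt_sub_ofReal_cpow (hr : r ≠ 0) {z : ℂ} {s : ℝ} (hzs : z ≠ s) :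
    HasDerivAt (fun t : ℝ => (z - t) ^ (r : ℂ)) (-(r * (z - s) ^ ((r - 1 : ℝ) : ℂ))) s := by
  push_cast
  by_cases hz : z.im = 0
  · obtain ⟨x, rfl⟩ : ∃ x : ℝ, z = x := ⟨z.re, Complex.ext rfl hz⟩
    have hxs : x - s ≠ 0 := sub_ne_zero.2 fun h => hzs (congrArg _ h)
    simpa [Function.comp_def] using
      (hasDerivAt_ofReal_cpow_const hxs (Complex.ofReal_ne_zero.2 hr)).scomp s
        ((hasDerivAt_id s).const_sub x)
  · have hslit : z - s ∈ Complex.slitPlane := .inr (by simpa using hz)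
    simpa using (((hasDerivAt_id (s : ℂ)).const_sub z).cpow_const (c := (r : ℂ)) hslit).comp_ofReal

lemma continuousAt_sub_ofReal_cpow (r : ℝ) {z : ℂ} {s : ℝ} (hzs : z ≠ s) :
    ContinuousAt (fun t : ℝ => (z - t) ^ (r : ℂ)) s := by
  rcases eq_or_ne r 0 with rfl | hr
  · simpa using continuousAt_const
  · exact (hasDerivAt_sub_ofReal_cpow hr hzs).continuousAt

lemma fracCauchyTransform_deriv (hr : r ≠ 0) (hv : ContDiff ℝ 1 v) (hsupp : HasCompactSupport v)
    {z : ℂ} (hz : ∀ s ∈ tsupport v, z ≠ s) :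
    fracCauchyTransform r (deriv v) z = r * fracCauchyTransform (r - 1) v z := by
  have hpow {s : ℝ} (hs : s ∈ tsupport v) := hasDerivAt_sub_ofReal_cpow hr (hz s hs)
  have hint {g k : ℝ → ℂ} (hg : Continuous g) (hgv : tsupport g ⊆ tsupport v)
      (hk : ∀ s ∈ tsupport v, ContinuousAt k s) : Integrable (g * k) := by
    have hgk : tsupport (g * k) ⊆ tsupport g := tsupport_mul_subset_left
    refine (continuous_of_tsupport fun s hs => ?_).integrable_of_hasCompactSupport
      (hsupp.of_isClosed_subset (isClosed_tsupport _) (hgk.trans hgv))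
    exact hg.continuousAt.mul (hk s (hgv (hgk hs)))
  have hparts := integral_mul_deriv_eq_deriv_mul_of_integrable
    (fun s _ => (hv.differentiable one_ne_zero s).hasDerivAt) (fun s hs => hpow hs)
    (hint hv.continuous subset_rfl fun s hs => ?_)
    (hint (hv.continuous_deriv le_rfl) tsupport_deriv_subset fun s hs => (hpow hs).continuousAt)
    (hint hv.continuous subset_rfl fun s hs => (hpow hs).continuousAt)
  · rw [fracCauchyTransform, ← neg_eq_iff_eq_neg.2 hparts, fracCauchyTransform,
      ← integral_const_mul, ← integral_neg]
    congr 1 with s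
    ring
  · exact ((continuousAt_sub_ofReal_cpow _ (hz s hs)).const_mul _).neg

lemma isBigO_fracCauchyTransform (hr : r ≤ 0) (hv : Integrable v) (hsupp : HasCompactSupport v) :
    fracCauchyTransform r v =O[cobounded ℂ] fun z => ‖z‖ ^ r := by
  obtain ⟨R, hR⟩ := hsupp.isCompact.isBounded.exists_norm_le
  refine IsBigO.of_bound ((∫ s, ‖v s‖) * 2⁻¹ ^ r) ?_
  filter_upwards [tendsto_norm_cobounded_atTop.eventually_ge_atTop (2 * R),
    tendsto_norm_cobounded_atTop.eventually_gt_atTop 0] with z hzR hz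
  have hbound (s : ℝ) : ‖v s * (z - s) ^ (r : ℂ)‖ ≤ ‖v s‖ * (2⁻¹ * ‖z‖) ^ r := by
    by_cases hs : s ∈ tsupport v
    · have hzs : 2⁻¹ * ‖z‖ ≤ ‖z - s‖ := by
        have := norm_sub_norm_le z s
        rw [Complex.norm_real] at this
        linarith [hR s hs]
      rw [norm_mul, Complex.norm_cpow_real]
      exact mul_le_mul_of_nonneg_left (rpow_le_rpow_of_nonpos (by positivity) hzs hr)
        (norm_nonneg _)
    · simp [image_eq_zero_of_notMem_tsupport hs]
  calc ‖fracCauchyTransform r v z‖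
      ≤ ∫ s, ‖v s‖ * (2⁻¹ * ‖z‖) ^ r :=
        norm_integral_le_of_norm_le (hv.norm.mul_const _) (.of_forall hbound)
    _ = (∫ s, ‖v s‖) * 2⁻¹ ^ r * ‖‖z‖ ^ r‖ := by
        rw [integral_mul_const, mul_rpow (by positivity) hz.le, norm_of_nonneg (by positivity),
          mul_assoc]

lemma isBigO_fracCauchyTransform_deriv (hr : r < 0) (hv : ContDiff ℝ 1 v)
    (hsupp : HasCompactSupport v) :
    fracCauchyTransform r (deriv v) =O[cobounded ℂ] fun z => z⁻¹ := by
  have hoff : ∀ᶠ z : ℂ in cobounded ℂ, ∀ s ∈ tsupport v, z ≠ s := by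
    have hK := (hsupp.isCompact.image Complex.continuous_ofReal).isBounded
    filter_upwards [isBounded_def.1 hK] with z hz s hs hzs
    exact hz ⟨s, hs, hzs.symm⟩
  have hparts : fracCauchyTransform r (deriv v) =ᶠ[cobounded ℂ]
      fun z => r * fracCauchyTransform (r - 1) v z :=
    hoff.mono fun z hz => fracCauchyTransform_deriv hr.ne hv hsupp hz
  refine hparts.trans_isBigO (((isBigO_fracCauchyTransform (by linarith)
    (hv.continuous.integrable_of_hasCompactSupport hsupp) hsupp).const_mul_left _).trans ?_)
  refine IsBigO.of_bound 1 ?_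
  filter_upwards [tendsto_norm_cobounded_atTop.eventually_ge_atTop 1] with z hz
  rw [one_mul, norm_inv, ← rpow_neg_one, norm_of_nonneg (by positivity)]
  exact rpow_le_rpow_of_exponent_le hz (by linarith)

lemma memLp_two_fracCauchyTransform_deriv (hr : -1 < r) (hr0 : r < 0) (hv : ContDiff ℝ 1 v)
    (hsupp : HasCompactSupport v) :
    MemLp (fun x : ℝ => fracCauchyTransform r (deriv v) x) 2 := by
  refine memLp_two_of_isBigO_inv ?_ ?_
  · exact (continuousOn_fracCauchyTransform hr hr0.le (hv.continuous_deriv le_rfl)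
      hsupp.deriv).comp_continuous Complex.continuous_ofReal fun _ => by simp
  · rw [← Metric.cobounded_eq_cocompact]
    exact ((isBigO_fracCauchyTransform_deriv hr0 hv hsupp).comp_tendsto
      (RCLike.tendsto_ofReal_cobounded_cobounded ℂ)).trans (isBigO_of_le _ fun x => by simp)

lemma integral_fracCauchyTransform_deriv_sq (hr : -1 < r) (hr0 : r < 0) (hv : ContDiff ℝ 1 v)
    (hsupp : HasCompactSupport v) :
    ∫ x : ℝ, fracCauchyTransform r (deriv v) x ^ 2 = 0 := by
  have hF := diffContOnCl_fracCauchyTransform hr hr0.le (hv.continuous_deriv le_rfl) hsupp.deriv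
  have hdecay := isBigO_fracCauchyTransform_deriv hr0 hv hsupp
  have hdecay_sq : (fun z => fracCauchyTransform r (deriv v) z ^ 2)
      =o[cobounded ℂ] fun z => z⁻¹ := by
    have hinv : (fun z : ℂ => z⁻¹) =o[cobounded ℂ] fun _ => (1 : ℂ) :=
      (isLittleO_one_iff ℂ).2 tendsto_inv₀_cobounded
    simpa [sq] using hdecay.mul_isLittleO (hdecay.trans_isLittleO hinv)
  have hmem := memLp_two_fracCauchyTransform_deriv hr hr0 hv hsupp
  have hint : Integrable fun x : ℝ => fracCauchyTransform r (deriv v) x ^ 2 :=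
    (hmem.integrable_mul hmem).congr (.of_forall fun _ => (sq _).symm)
  exact integral_ofReal_eq_zero_of_isLittleO_inv
    (f := fun z => fracCauchyTransform r (deriv v) z ^ 2)
    (by simpa only [sq, smul_eq_mul] using hF.smul hF) hint (hdecay_sq.mono inf_le_left)

end FracCauchyTransform

section Kernel

variable {k u : ℝ → ℝ}

lemma integrable_kernel_sub_mul (hk : LocallyIntegrable k) (hu : Continuous u)
    (hsupp : HasCompactSupport u) (x : ℝ) : Integrable fun s => k (x - s) * u s :=
  convolutionExistsAt_iff_integrable_swap.1
    (hsupp.convolutionExists_right (ContinuousLinearMap.mul ℝ ℝ) hk hu x)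

lemma deriv_integral_kernel_sub_mul (hk : LocallyIntegrable k) (hu : ContDiff ℝ 1 u)
    (hsupp : HasCompactSupport u) (x : ℝ) :
    deriv (fun y => ∫ s, k (y - s) * u s) x = ∫ s, k (x - s) * deriv u s := by
  have h := hsupp.hasDerivAt_convolution_right (ContinuousLinearMap.mul ℝ ℝ) hk hu x
  have hconv (g : ℝ → ℝ) : convolution k g (ContinuousLinearMap.mul ℝ ℝ) volume =
      fun y => ∫ s, k (y - s) * g s := funext fun _ => convolution_eq_swap _
  rw [hconv, hconv] at h
  exact h.deriv

end Kernel

section FractionalDerivatives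

/-- The truncated power `t₊ ^ r`, with the value `0 ^ r` at `t = 0`. Convolution with it is, up to a
Gamma factor, the Riemann–Liouville integral of order `r + 1`. -/
noncomputable def truncPow (r t : ℝ) : ℝ := (Ici 0).indicator (· ^ r) t

variable {r μ : ℝ} {u : ℝ → ℝ}

lemma truncPow_of_nonneg {t : ℝ} (ht : 0 ≤ t) : truncPow r t = t ^ r :=
  indicator_of_mem ht _

lemma truncPow_of_neg {t : ℝ} (ht : t < 0) : truncPow r t = 0 :=
  indicator_of_notMem (not_le.2 ht) _

lemma norm_truncPow_le (r t : ℝ) : ‖truncPow r t‖ ≤ |t| ^ r := by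
  rcases le_or_gt 0 t with ht | ht
  · rw [truncPow_of_nonneg ht, abs_of_nonneg ht, norm_of_nonneg (rpow_nonneg ht r)]
  · rw [truncPow_of_neg ht, norm_zero]
    positivity

lemma measurable_truncPow (r : ℝ) : Measurable (truncPow r) :=
  Measurable.indicator (by fun_prop) measurableSet_Ici

lemma locallyIntegrable_truncPow (hr : -1 < r) : LocallyIntegrable (truncPow r) :=
  locallyIntegrable_of_norm_le_abs_rpow hr (measurable_truncPow r) (norm_truncPow_le r)

lemma locallyIntegrable_truncPow_neg (hr : -1 < r) :
    LocallyIntegrable fun t => truncPow r (-t) :=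
  locallyIntegrable_of_norm_le_abs_rpow hr ((measurable_truncPow r).comp measurable_neg)
    fun t => by simpa using norm_truncPow_le r (-t)

lemma ofReal_cpow_eq_truncPow_add (r : ℝ) {t : ℝ} (ht : t ≠ 0) :
    (t : ℂ) ^ (r : ℂ) =
      truncPow r t + Complex.exp ((r * π : ℝ) * Complex.I) * truncPow r (-t) := by
  rcases ht.lt_or_gt with h | h
  · rw [truncPow_of_neg h, truncPow_of_nonneg (neg_nonneg.2 h.le),
      Complex.ofReal_cpow_of_nonpos h.le, Complex.ofReal_cpow (neg_nonneg.2 h.le)]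
    push_cast
    rw [zero_add, mul_comm]
    congr 2
    ring
  · rw [truncPow_of_nonneg h.le, truncPow_of_neg (neg_neg_iff_pos.2 h), Complex.ofReal_cpow h.le]
    simp

lemma fracCauchyTransform_ofReal (hr : -1 < r) (hu : Continuous u) (hsupp : HasCompactSupport u)
    (x : ℝ) :
    fracCauchyTransform r (fun s => (u s : ℂ)) x = (∫ s, truncPow r (x - s) * u s : ℝ) +
      Complex.exp ((r * π : ℝ) * Complex.I) * (∫ s, truncPow r (-(x - s)) * u s : ℝ) := by
  have hleft : Integrable fun s => ((truncPow r (x - s) * u s : ℝ) : ℂ) :=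
    (integrable_kernel_sub_mul (locallyIntegrable_truncPow hr) hu hsupp x).ofReal
  have hright : Integrable fun s => ((truncPow r (-(x - s)) * u s : ℝ) : ℂ) :=
    (integrable_kernel_sub_mul (locallyIntegrable_truncPow_neg hr) hu hsupp x).ofReal
  rw [← integral_complex_ofReal, ← integral_complex_ofReal, ← integral_const_mul,
    ← integral_add hleft (hright.const_mul _)]
  refine integral_congr_ae ?_
  filter_upwards [Measure.ae_ne volume x] with s hs
  rw [← Complex.ofReal_sub, ofReal_cpow_eq_truncPow_add r (sub_ne_zero.2 hs.symm)]
  push_cast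
  ring

lemma leftFracDerivR_eq_integral_deriv (hμ : μ < 1) (hu : ContDiff ℝ 1 u)
    (hsupp : HasCompactSupport u) (x : ℝ) :
    leftFracDerivR μ u x =
      (1 / Real.Gamma (1 - μ)) * ∫ s, truncPow (-μ) (x - s) * deriv u s := by
  rw [leftFracDerivR,
    ← deriv_integral_kernel_sub_mul (locallyIntegrable_truncPow (neg_lt_neg hμ)) hu hsupp]
  congr 2 with y
  rw [← integral_indicator measurableSet_Iic]
  congr 1 with s
  simp only [truncPow, indicator, mem_Iic, mem_Ici, sub_nonneg, ite_mul, zero_mul]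

lemma rightFracDerivR_eq_integral_deriv (hμ : μ < 1) (hu : ContDiff ℝ 1 u)
    (hsupp : HasCompactSupport u) (x : ℝ) :
    rightFracDerivR μ u x =
      -(1 / Real.Gamma (1 - μ)) * ∫ s, truncPow (-μ) (-(x - s)) * deriv u s := by
  rw [rightFracDerivR,
    ← deriv_integral_kernel_sub_mul (locallyIntegrable_truncPow_neg (neg_lt_neg hμ)) hu hsupp]
  congr 2 with y
  rw [← integral_indicator measurableSet_Ici]
  congr 1 with s
  simp only [truncPow, indicator, mem_Ici, neg_sub, sub_nonneg, ite_mul, zero_mul]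

lemma leftFracDerivR_sub_exp_mul_rightFracDerivR (hμ : μ < 1) (hu : ContDiff ℝ 1 u)
    (hsupp : HasCompactSupport u) (x : ℝ) :
    (leftFracDerivR μ u x : ℂ) -
        Complex.exp ((-μ * π : ℝ) * Complex.I) * rightFracDerivR μ u x =
      ((Real.Gamma (1 - μ))⁻¹ : ℝ) * fracCauchyTransform (-μ) (deriv fun s => (u s : ℂ)) x := by
  have hderiv : (deriv fun s => (u s : ℂ)) = fun s => ((deriv u s : ℝ) : ℂ) :=
    funext fun s => (hu.differentiable one_ne_zero s).hasDerivAt.ofReal_comp.deriv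
  rw [hderiv, fracCauchyTransform_ofReal (neg_lt_neg hμ) (hu.continuous_deriv le_rfl) hsupp.deriv,
    leftFracDerivR_eq_integral_deriv hμ hu hsupp, rightFracDerivR_eq_integral_deriv hμ hu hsupp]
  push_cast
  ring

theorem inner_left_right_fracDeriv_general (hμ0 : 0 < μ) (hμ1 : μ < 1) (hu : ContDiff ℝ 1 u)
    (hsupp : HasCompactSupport u) :
    ∫ x : ℝ, leftFracDerivR μ u x * rightFracDerivR μ u x
      = Real.cos (μ * Real.pi) * ∫ x : ℝ, (leftFracDerivR μ u x) ^ 2 := by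
  have hr : -1 < -μ := neg_lt_neg hμ1
  have hr0 : -μ < 0 := neg_lt_zero.2 hμ0
  have hv : ContDiff ℝ 1 fun s => (u s : ℂ) := Complex.ofRealCLM.contDiff.comp hu
  have hvsupp : HasCompactSupport fun s => (u s : ℂ) := hsupp.comp_left Complex.ofReal_zero
  have hsin : sin (-μ * π) ≠ 0 := by
    rw [neg_mul, sin_neg, neg_ne_zero]
    exact (sin_pos_of_pos_of_lt_pi (by positivity) (mul_lt_of_lt_one_left pi_pos hμ1)).ne'
  have hboundary := leftFracDerivR_sub_exp_mul_rightFracDerivR hμ1 hu hsupp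
  obtain ⟨hleft, hright⟩ := memLp_of_sub_exp_mul (p := leftFracDerivR μ u)
    (q := rightFracDerivR μ u) hsin (by
      simpa only [hboundary] using
        (memLp_two_fracCauchyTransform_deriv hr hr0 hv hvsupp).const_mul _)
  rw [← cos_neg, ← neg_mul]
  refine integral_mul_eq_cos_mul_integral_sq hsin hleft hright ?_
  simp only [hboundary, mul_pow, integral_const_mul,
    integral_fracCauchyTransform_deriv_sq hr hr0 hv hvsupp, mul_zero]

end FractionalDerivatives

/-- For `μ ∈ (0,1)`, `μ ≠ 1/2`, and `u` smooth with compact support,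
`( {}_{-∞}D_x^μ u , {}_xD_∞^μ u )_{L²(ℝ)} = cos(μπ) ‖ {}_{-∞}D_x^μ u ‖²_{L²(ℝ)}`. -/
theorem inner_left_right_fracDeriv
    (μ : ℝ) (u : ℝ → ℝ)
    (hμ0 : 0 < μ) (hμ1 : μ < 1) (hμhalf : μ ≠ 1 / 2)
    (hu : ContDiff ℝ (⊤ : ℕ∞) u) (hsupp : HasCompactSupport u) :
    ∫ x : ℝ, leftFracDerivR μ u x * rightFracDerivR μ u x
      = Real.cos (μ * Real.pi) * ∫ x : ℝ, (leftFracDerivR μ u x) ^ 2 :=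
  inner_left_right_fracDeriv_general hμ0 hμ1 (hu.of_le (mod_cast le_top)) hsupp
end
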